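/- Let n ≥ 0, let i_1, i_2 ∈ {0,1}, and let α be a word over {0,1} of length 2^n. If i_1^{(n)} i_2^{(n)} α is a factor of ω, or if α i_1^{(n)} i_2^{(n)} is a factor of ω, then α = 0^{(n)} or α = 1^{(n)}. -/

import Mathlib

/-- One-sided Thue–Morse sequence: parity of the binary digit sum. -/
def tm (n : ℕ) : ℕ := (Nat.digits 2 n).sum % 2

/-- Two-sided Thue–Morse sequence `ω : ℤ → {0,1}`. -/
def tmZ (n : ℤ) : ℕ := if 0 ≤ n then tm n.toNat else tm (-n - 1).toNat

/-- The block `ω_[m, m+k-1]` of the two-sided Thue–Morse sequence. -/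
def tmBlock (m : ℤ) (k : ℕ) : List ℕ := (List.range k).map fun j => tmZ (m + j)

/-- A (nonempty) word is a factor of the two-sided Thue–Morse sequence. -/
def IsFactor (α : List ℕ) : Prop := α ≠ [] ∧ ∃ m : ℤ, α = tmBlock m α.length

/-- The words `i⁽ⁿ⁾`: `blk i 0 = [i]`, `blk i (n+1) = blk i n ++ blk (1-i) n`. -/
def blk : ℕ → ℕ → List ℕ
  | i, 0 => [i]
  | i, n + 1 => blk i n ++ blk (1 - i) n

lemma tm_lt (n : ℕ) : tm n < 2 := Nat.mod_lt _ (by norm_num)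

lemma tm_zero : tm 0 = 0 := by simp [tm]

lemma tm_even (n : ℕ) : tm (2 * n) = tm n := by
  rcases Nat.eq_zero_or_pos n with rfl | h
  · rfl
  · unfold tm
    rw [Nat.digits_def' (by norm_num) (by omega)]
    simp

lemma tm_odd (n : ℕ) : tm (2 * n + 1) = 1 - tm n := by
  unfold tm
  rw [Nat.digits_def' (by norm_num) (by omega)]
  have h1 : (2 * n + 1) % 2 = 1 := by omega
  have h2 : (2 * n + 1) / 2 = n := by omega
  rw [h1, h2, List.sum_cons]
  omega

/-- The sequence and its companion with the left half complemented. -/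
def tw (b : ℕ) (n : ℤ) : ℕ := if 0 ≤ n then tm n.toNat else (b + tm (-n - 1).toNat) % 2

lemma tw_lt (b : ℕ) (n : ℤ) : tw b n < 2 := by
  unfold tw
  split
  · exact tm_lt _
  · omega

lemma tw_even (b : ℕ) (n : ℤ) : tw b (2 * n) = tw (b + 1) n := by
  unfold tw
  by_cases h : 0 ≤ n
  · rw [if_pos h, if_pos (by omega), show (2 * n).toNat = 2 * n.toNat by omega, tm_even]
  · rw [if_neg h, if_neg (by omega),
      show (-(2 * n) - 1).toNat = 2 * (-n - 1).toNat + 1 by omega, tm_odd]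
    have := tm_lt (-n - 1).toNat
    omega

lemma tw_odd (b : ℕ) (n : ℤ) : tw b (2 * n + 1) = 1 - tw (b + 1) n := by
  unfold tw
  by_cases h : 0 ≤ n
  · rw [if_pos h, if_pos (by omega), show (2 * n + 1).toNat = 2 * n.toNat + 1 by omega, tm_odd]
  · rw [if_neg h, if_neg (by omega),
      show (-(2 * n + 1) - 1).toNat = 2 * (-n - 1).toNat by omega, tm_even]
    have := tm_lt (-n - 1).toNat
    omega

lemma tw_zero (n : ℤ) : tw 0 n = tmZ n := by
  unfold tw tmZ
  split
  · rfl
  · have := tm_lt (-n - 1).toNat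
    omega

lemma tw_no_cube (b : ℕ) (k : ℤ) (h1 : tw b k = tw b (k + 1))
    (h2 : tw b (k + 1) = tw b (k + 2)) : False := by
  rcases Int.even_or_odd' k with ⟨l, rfl | rfl⟩
  · rw [tw_even, tw_odd] at h1
    have := tw_lt (b + 1) l
    omega
  · rw [show 2 * l + 1 + 1 = 2 * (l + 1) by ring, show 2 * l + 1 + 2 = 2 * (l + 1) + 1 by ring,
      tw_even, tw_odd] at h2
    have := tw_lt (b + 1) (l + 1)
    omega

/-- Block of level `n`, type `c` occurs at position `m`. -/
def At (b n : ℕ) (m : ℤ) (c : ℕ) : Prop := ∀ j : ℕ, j < 2 ^ n → tw b (m + j) = (c + tm j) % 2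

lemma At_even (b n : ℕ) (k : ℤ) (c : ℕ) : At b (n + 1) (2 * k) c ↔ At (b + 1) n k c := by
  constructor
  · intro h j hj
    have := h (2 * j) (by rw [pow_succ]; omega)
    rw [tm_even] at this
    rw [← this, ← tw_even]
    push_cast
    congr 1; ring
  · intro h j hj
    rw [pow_succ] at hj
    rcases Nat.even_or_odd' j with ⟨l, rfl | rfl⟩
    · rw [tm_even, ← h l (by omega), ← tw_even]
      push_cast
      congr 1; ring
    · have := h l (by omega)
      rw [tm_odd, show (2 * k + ((2 * l + 1 : ℕ) : ℤ)) = 2 * (k + l) + 1 by push_cast; ring,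
        tw_odd, this]
      have := tm_lt l
      omega

lemma At_odd (b n : ℕ) (k : ℤ) (c d : ℕ) (h1 : At b (n + 1) (2 * k + 1) c)
    (h2 : At b (n + 1) (2 * k + 1 + 2 ^ (n + 1)) d) : False := by
  have t1 : tm 1 = 1 := by simp [tm]
  have t2 : tm 2 = 1 := by simp [tm]
  have p2 := tw_even b (k + 1)
  have p3 := tw_odd b (k + 1)
  have l1 := tw_lt (b + 1) (k + 1)
  have a1 := h1 1 (by rw [pow_succ]; have := Nat.two_pow_pos n; omega)
  rw [show 2 * k + 1 + ((1 : ℕ) : ℤ) = 2 * (k + 1) by push_cast; ring, t1] at a1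
  cases n with
  | succ n =>
    have a2 := h1 2 (by
      rw [pow_succ, pow_succ]; have := Nat.two_pow_pos n; omega)
    rw [show 2 * k + 1 + ((2 : ℕ) : ℤ) = 2 * (k + 1) + 1 by push_cast; ring, t2] at a2
    omega
  | zero =>
    have a0 := h1 0 (by norm_num)
    have b0 := h2 0 (by norm_num)
    have b1 := h2 1 (by norm_num)
    rw [show 2 * k + 1 + ((0 : ℕ) : ℤ) = 2 * k + 1 by push_cast; ring, tm_zero] at a0
    rw [show 2 * k + 1 + 2 ^ (0 + 1) + ((0 : ℕ) : ℤ) = 2 * (k + 1) + 1 by push_cast; ring,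
      tm_zero] at b0
    rw [show 2 * k + 1 + 2 ^ (0 + 1) + ((1 : ℕ) : ℤ) = 2 * (k + 2) by push_cast; ring, t1] at b1
    have p1 := tw_odd b k
    have p4 := tw_even b (k + 2)
    have l0 := tw_lt (b + 1) k
    have l2 := tw_lt (b + 1) (k + 2)
    exact tw_no_cube (b + 1) k (by omega) (by omega)

lemma At_main (n : ℕ) : ∀ (b : ℕ) (m : ℤ) (c d : ℕ), At b n m c → At b n (m + 2 ^ n) d →
    (∃ e < 2, At b n (m + 2 ^ n + 2 ^ n) e) ∧ (∃ e < 2, At b n (m - 2 ^ n) e) := by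
  induction n with
  | zero =>
    intro b m c d _ _
    have key : ∀ x : ℤ, ∃ e < 2, At b 0 x e := by
      intro x
      refine ⟨tw b x, tw_lt _ _, fun j hj => ?_⟩
      obtain rfl : j = 0 := by simpa using hj
      have := tw_lt b x
      simp only [tm_zero, Nat.cast_zero, add_zero]
      omega
    exact ⟨key _, key _⟩
  | succ n ih =>
    intro b m c d h1 h2
    rcases Int.even_or_odd' m with ⟨k, rfl | rfl⟩
    · rw [show 2 * k + 2 ^ (n + 1) = 2 * (k + 2 ^ n) by ring] at h2
      obtain ⟨⟨e, he, h3⟩, ⟨f, hf, h4⟩⟩ :=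
        ih (b + 1) k c d ((At_even ..).1 h1) ((At_even ..).1 h2)
      refine ⟨⟨e, he, ?_⟩, ⟨f, hf, ?_⟩⟩
      · rw [show 2 * k + 2 ^ (n + 1) + 2 ^ (n + 1) = 2 * (k + 2 ^ n + 2 ^ n) by ring]
        exact (At_even ..).2 h3
      · rw [show 2 * k - 2 ^ (n + 1) = 2 * (k - 2 ^ n) by ring]
        exact (At_even ..).2 h4
    · exact (At_odd b n k c d h1 h2).elim

lemma blk_length (n : ℕ) : ∀ i, (blk i n).length = 2 ^ n := by
  induction n with
  | zero => intro i; simp [blk]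
  | succ n ih => intro i; simp [blk, ih, pow_succ]; omega

lemma tm_add_pow (n : ℕ) : ∀ j, j < 2 ^ n → tm (2 ^ n + j) = 1 - tm j := by
  induction n with
  | zero => intro j hj; obtain rfl : j = 0 := by simpa using hj
            simp [tm]
  | succ n ih =>
    intro j hj
    rw [pow_succ] at hj ⊢
    rcases Nat.even_or_odd' j with ⟨l, rfl | rfl⟩
    · rw [show 2 ^ n * 2 + 2 * l = 2 * (2 ^ n + l) by ring, tm_even, tm_even, ih l (by omega)]
    · rw [show 2 ^ n * 2 + (2 * l + 1) = 2 * (2 ^ n + l) + 1 by ring, tm_odd, tm_odd,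
        ih l (by omega)]

lemma blk_eq (n : ℕ) : ∀ i < 2, blk i n = (List.range (2 ^ n)).map fun j => (i + tm j) % 2 := by
  induction n with
  | zero => intro i hi; simp [blk, tm_zero]; omega
  | succ n ih =>
    intro i hi
    rw [blk, ih i hi, ih (1 - i) (by omega), pow_succ, mul_two, List.range_add, List.map_append,
      List.map_map]
    congr 1
    apply List.map_congr_left
    intro j hj
    have := tm_add_pow n j (List.mem_range.1 hj)
    have := tm_lt j
    simp only [Function.comp]
    omega

lemma tmBlock_eq (m : ℤ) (k : ℕ) :
    tmBlock m k = (List.range k).map fun j : ℕ => tmZ (m + (j : ℤ)) := by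
  unfold tmBlock
  simp [List.map_flatMap, List.map_eq_flatMap, List.flatMap_assoc]

lemma block_eq_iff (n : ℕ) (m : ℤ) (i : ℕ) (hi : i < 2) :
    tmBlock m (2 ^ n) = blk i n ↔ At 0 n m i := by
  rw [blk_eq n i hi, tmBlock_eq, List.map_inj_left]
  simp [At, tw_zero]

lemma tmBlock_add (m : ℤ) (a b : ℕ) : tmBlock m (a + b) = tmBlock m a ++ tmBlock (m + a) b := by
  simp only [tmBlock_eq]
  rw [List.range_add, List.map_append, List.map_map]
  congr 1
  apply List.map_congr_left
  intro j _
  simp [add_assoc]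

lemma tmBlock_length (m : ℤ) (a : ℕ) : (tmBlock m a).length = a := by simp [tmBlock_eq]

lemma split3 (N : ℕ) (x y z : List ℕ) (hx : x.length = N) (hy : y.length = N) (hz : z.length = N)
    (h : IsFactor (x ++ y ++ z)) :
    ∃ m : ℤ, x = tmBlock m N ∧ y = tmBlock (m + N) N ∧ z = tmBlock (m + N + N) N := by
  obtain ⟨_, m, hm⟩ := h
  rw [List.length_append, List.length_append, hx, hy, hz, tmBlock_add, tmBlock_add] at hm
  obtain ⟨h1, h2⟩ := List.append_inj hm (by simp [tmBlock_length, hx, hy])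
  obtain ⟨h3, h4⟩ := List.append_inj h1 (by simp [tmBlock_length, hx])
  refine ⟨m, h3, h4, ?_⟩
  rw [h2]; push_cast; rw [add_assoc]

/-- If `α` has length `2ⁿ` and `i₁⁽ⁿ⁾ i₂⁽ⁿ⁾ α` (or `α i₁⁽ⁿ⁾ i₂⁽ⁿ⁾`) is a factor of the
two-sided Thue–Morse sequence, then `α = 0⁽ⁿ⁾` or `α = 1⁽ⁿ⁾`. -/
theorem blk_follower (n : ℕ) (i₁ i₂ : ℕ) (hi₁ : i₁ = 0 ∨ i₁ = 1) (hi₂ : i₂ = 0 ∨ i₂ = 1)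
    (α : List ℕ) (hα : α.length = 2 ^ n)
    (h : IsFactor (blk i₁ n ++ blk i₂ n ++ α) ∨ IsFactor (α ++ blk i₁ n ++ blk i₂ n)) :
    α = blk 0 n ∨ α = blk 1 n := by
  have g1 : i₁ < 2 := by omega
  have g2 : i₂ < 2 := by omega
  have fin : ∀ m : ℤ, α = tmBlock m (2 ^ n) → (∃ e < 2, At 0 n m e) →
      α = blk 0 n ∨ α = blk 1 n := by
    rintro m rfl ⟨e, he, hA⟩
    have := (block_eq_iff n m e he).2 hA
    interval_cases e
    · exact Or.inl this
    · exact Or.inr this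
  rcases h with h | h
  · obtain ⟨m, h1, h2, h3⟩ := split3 (2 ^ n) _ _ _ (blk_length _ _) (blk_length _ _) hα h
    have a1 := (block_eq_iff n _ _ g1).1 h1.symm
    have a2 := (block_eq_iff n _ _ g2).1 h2.symm
    push_cast at a2 h3
    exact fin _ h3 (At_main n 0 m _ _ a1 a2).1
  · obtain ⟨m, h1, h2, h3⟩ := split3 (2 ^ n) _ _ _ hα (blk_length _ _) (blk_length _ _) h
    have a1 := (block_eq_iff n _ _ g1).1 h2.symm
    have a2 := (block_eq_iff n _ _ g2).1 h3.symm
    push_cast at a1 a2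
    have := (At_main n 0 _ _ _ a1 a2).2
    rw [add_sub_cancel_right] at this
    exact fin _ h1 this
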